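/- arXiv:2503.24013 — 3 statements merged into one kernel-verified Lean document; each statement's English description precedes it below -/
import Mathlib

section
/- Let X and Y be nonempty finite types and let P : X × Y → ℝ be a joint distribution. Assume P is non-deterministic, i.e., there exists x with P_X(x) > 0 such that the conditional pmf P(·|x) is not a point mass (equivalently, the conditional Shannon entropy H[Y|X] is strictly positive). Then no distortion function Δ : X × Y × Y → ℝ is stably distribution preserving at P. That is, for every Δ and every ε > 0 there exists a joint distribution P̃ with TV(P, P̃) ≤ ε such that some kernel Q* minimizing the expected distortion 𝔇(·; P̃) has output marginal under P̃_X different from P̃_Y. -/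
open Finset

variable {X Y : Type*} [Fintype X] [Fintype Y]

/-- `P : X × Y → ℝ` is a joint probability distribution. -/
def IsJointDist (P : X × Y → ℝ) : Prop :=
  (∀ p, 0 ≤ P p) ∧ ∑ p : X × Y, P p = 1

/-- `q : Y → ℝ` is a probability mass function. -/
def IsPMF {Z : Type*} [Fintype Z] (q : Z → ℝ) : Prop :=
  (∀ z, 0 ≤ q z) ∧ ∑ z : Z, q z = 1

/-- `q` is a point mass: it assigns probability 1 to a single element. -/
def IsPointMass {Z : Type*} [Fintype Z] [DecidableEq Z] (q : Z → ℝ) : Prop :=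
  ∃ z₀, ∀ z, q z = if z = z₀ then 1 else 0

/-- The X-marginal of a joint distribution. -/
def margX (P : X × Y → ℝ) (x : X) : ℝ := ∑ y : Y, P (x, y)

/-- The Y-marginal of a joint distribution. -/
def margY (P : X × Y → ℝ) (y : Y) : ℝ := ∑ x : X, P (x, y)

/-- The conditional pmf `P(· | x)`. -/
noncomputable def condY (P : X × Y → ℝ) (x : X) (y : Y) : ℝ := P (x, y) / margX P x

/-- `Q : X → Y → ℝ` is a (Markov) kernel: each `Q x` is a pmf on `Y`. -/
def IsKernel (Q : X → Y → ℝ) : Prop := ∀ x, IsPMF (Q x)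

/-- The expected distortion of the kernel `Q` under the joint distribution `P`:
`𝔇(Q; P) = Σ_{x,y} P(x,y) · Σ_{y'} Q(x)(y') · Δ(x,y,y')`. -/
def expDist (Δ : X → Y → Y → ℝ) (Q : X → Y → ℝ) (P : X × Y → ℝ) : ℝ :=
  ∑ x : X, ∑ y : Y, P (x, y) * ∑ y' : Y, Q x y' * Δ x y y'

/-- The output marginal of the kernel `Q` under the input pmf `μ`. -/
def outMarg (Q : X → Y → ℝ) (μ : X → ℝ) (y' : Y) : ℝ := ∑ x : X, μ x * Q x y'

/-- Total variation distance between two pmfs on a finite type. -/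
noncomputable def TVdist {Z : Type*} [Fintype Z] (p q : Z → ℝ) : ℝ := (1 / 2) * ∑ z : Z, |p z - q z|

/-- `Q` minimizes the expected distortion `𝔇(·; P)` over all kernels. -/
def MinimizesExpDist (Δ : X → Y → Y → ℝ) (Q : X → Y → ℝ) (P : X × Y → ℝ) : Prop :=
  IsKernel Q ∧ ∀ Q', IsKernel Q' → expDist Δ Q P ≤ expDist Δ Q' P

/-- `Δ` is distribution preserving at the joint distribution `P`: every kernel
minimizing the expected distortion has output marginal (under `P`'s X-marginal)
equal to `P`'s Y-marginal. -/
def DistPreserving (Δ : X → Y → Y → ℝ) (P : X × Y → ℝ) : Prop :=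
  ∀ Q, MinimizesExpDist Δ Q P → outMarg Q (margX P) = margY P

/-- `Δ` is stably distribution preserving at `P`: it is distribution preserving
at every joint distribution in some TV `ε`-ball around `P`. -/
def StablyDistPreserving (Δ : X → Y → Y → ℝ) (P : X × Y → ℝ) : Prop :=
  ∃ ε > 0, ∀ P' : X × Y → ℝ, IsJointDist P' → TVdist P P' ≤ ε → DistPreserving Δ P'

/-- The kernel of a deterministic map `f`. -/
def detKernel [DecidableEq Y] (f : X → Y) (x : X) : Y → ℝ := Pi.single (f x) 1

/-- The pointwise cost of answering `y'` on input `x`. -/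
def pointCost (Δ : X → Y → Y → ℝ) (P : X × Y → ℝ) (x : X) (y' : Y) : ℝ :=
  ∑ y, P (x, y) * Δ x y y'

theorem expDist_eq_sum_pointCost (Δ : X → Y → Y → ℝ) (Q : X → Y → ℝ) (P : X × Y → ℝ) :
    expDist Δ Q P = ∑ x, ∑ y', Q x y' * pointCost Δ P x y' := by
  refine sum_congr rfl fun x _ => ?_
  simp only [pointCost, mul_sum]
  rw [sum_comm]
  exact sum_congr rfl fun _ _ => sum_congr rfl fun _ _ => by ring

omit [Fintype X] in
theorem isKernel_detKernel [DecidableEq Y] (f : X → Y) : IsKernel (detKernel f) := fun x =>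
  ⟨fun y => by unfold detKernel; rw [Pi.single_apply]; split_ifs <;> norm_num,
    by simp [detKernel]⟩

/-- The expected distortion always has a deterministic minimizer. -/
theorem exists_minimizesExpDist_detKernel [DecidableEq Y] [Nonempty Y] (Δ : X → Y → Y → ℝ)
    (P : X × Y → ℝ) : ∃ f : X → Y, MinimizesExpDist Δ (detKernel f) P := by
  choose f hf using fun x => Finite.exists_min (pointCost Δ P x)
  refine ⟨f, isKernel_detKernel f, fun Q hQ => ?_⟩
  rw [expDist_eq_sum_pointCost, expDist_eq_sum_pointCost]
  refine sum_le_sum fun x _ => ?_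
  calc ∑ y', detKernel f x y' * pointCost Δ P x y' = pointCost Δ P x (f x) := by
        simp [detKernel, Pi.single_apply]
    _ = ∑ y', Q x y' * pointCost Δ P x (f x) := by rw [← sum_mul, (hQ x).2, one_mul]
    _ ≤ ∑ y', Q x y' * pointCost Δ P x y' :=
        sum_le_sum fun y _ => mul_le_mul_of_nonneg_left (hf x y) ((hQ x).1 y)

/-- Move the mass `t` from `(x, b)` to `(x, a)`. -/
def moveMass [DecidableEq X] [DecidableEq Y] (P : X × Y → ℝ) (x : X) (a b : Y) (t : ℝ)
    (p : X × Y) : ℝ :=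
  P p + ((if p = (x, a) then t else 0) - if p = (x, b) then t else 0)

section moveMass

variable [DecidableEq X] [DecidableEq Y] {P : X × Y → ℝ} {x : X} {a b : Y} {t : ℝ}

theorem isJointDist_moveMass (hP : IsJointDist P) (ht : 0 ≤ t) (htb : t ≤ P (x, b)) :
    IsJointDist (moveMass P x a b t) := by
  refine ⟨fun p => ?_, ?_⟩
  · have := hP.1 p
    unfold moveMass
    by_cases hb : p = (x, b)
    · subst hb; split_ifs <;> linarith
    · rw [if_neg hb]; split_ifs <;> linarith
  · simp [moveMass, sum_add_distrib, sum_sub_distrib, hP.2]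

omit [Fintype X] in
theorem margX_moveMass : margX (moveMass P x a b t) = margX P := by
  funext z
  by_cases hz : z = x <;> simp [margX, moveMass, sum_add_distrib, sum_sub_distrib, hz]

omit [Fintype Y] in
theorem margY_moveMass (hab : a ≠ b) : margY (moveMass P x a b t) a = margY P a + t := by
  simp [margY, moveMass, sum_add_distrib, hab]

theorem TVdist_moveMass_le (ht : 0 ≤ t) : TVdist P (moveMass P x a b t) ≤ t := by
  have h : ∑ p, |P p - moveMass P x a b t p| ≤
      ∑ p, ((if p = (x, a) then t else 0) + if p = (x, b) then t else 0) := by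
    refine sum_le_sum fun p _ => ?_
    unfold moveMass
    rw [abs_le]
    constructor <;> split_ifs <;> linarith
  simp only [sum_add_distrib, sum_ite_eq', mem_univ, if_true] at h
  unfold TVdist
  linarith

end moveMass

omit [Fintype X] in
theorem exists_pos_and_ne_of_not_isPointMass [DecidableEq Y] {P : X × Y → ℝ} {x : X}
    (hx : 0 < margX P x) (hnp : ¬ IsPointMass (condY P x)) :
    ∃ a b, a ≠ b ∧ 0 < P (x, b) := by
  obtain ⟨b, -, hb⟩ := exists_lt_of_sum_lt (s := univ) (f := fun _ : Y => (0 : ℝ))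
    (g := fun y => P (x, y)) (by simpa [margX] using hx)
  by_contra! h
  have hall : ∀ a, a = b := fun a => by
    by_contra hne
    exact (h a b hne).not_gt hb
  refine hnp ⟨b, fun z => ?_⟩
  have hm : margX P x = P (x, b) := Fintype.sum_eq_single b fun z hz => (hz (hall z)).elim
  rw [if_pos (hall z), hall z, condY, hm, div_self (ne_of_gt hb)]

/-- The "no-two-birds" theorem: if the joint distribution `P` is
non-deterministic (some positive-probability input has a non-point-mass
conditional), then no distortion function is stably distribution preserving at
`P`: for every `Δ` and every `ε > 0` there is a joint distribution `P'` within
TV distance `ε` of `P` at which some minimizer of the expected distortion fails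
to be distribution preserving. -/
theorem no_two_birds [DecidableEq Y] [Nonempty X] [Nonempty Y]
    (P : X × Y → ℝ) (hP : IsJointDist P)
    (hnondet : ∃ x, 0 < margX P x ∧ ¬ IsPointMass (condY P x)) :
    ∀ Δ : X → Y → Y → ℝ, ∀ ε : ℝ, 0 < ε →
      ∃ P' : X × Y → ℝ, IsJointDist P' ∧ TVdist P P' ≤ ε ∧
        ∃ Q : X → Y → ℝ, MinimizesExpDist Δ Q P' ∧
          outMarg Q (margX P') ≠ margY P' := by
  classical
  intro Δ ε hε
  obtain ⟨x, hx, hnp⟩ := hnondet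
  obtain ⟨a, b, hab, hb⟩ := exists_pos_and_ne_of_not_isPointMass hx hnp
  have hδ : 0 < min ε (P (x, b)) := lt_min hε hb
  choose f hf using fun t : Set.Ioo 0 (min ε (P (x, b))) =>
    exists_minimizesExpDist_detKernel Δ (moveMass P x a b t)
  have : Infinite (Set.Ioo 0 (min ε (P (x, b)))) := (Set.Ioo_infinite hδ).to_subtype
  -- Two perturbations share a minimizer, and hence an output marginal, but not a `Y`-marginal.
  obtain ⟨s, t, hst, hne⟩ : ∃ s t, f s = f t ∧ s ≠ t :=
    Function.not_injective_iff.mp (not_injective_infinite_finite f)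
  by_contra! hcon
  have key : ∀ r, outMarg (detKernel (f r)) (margX P) a = margY P a + r := fun r => by
    have hr := r.2.2.le
    have h := hcon _ (isJointDist_moveMass (a := a) hP r.2.1.le (hr.trans (min_le_right _ _)))
      ((TVdist_moveMass_le r.2.1.le).trans (hr.trans (min_le_left _ _))) _ (hf r)
    rw [← margY_moveMass hab, ← h, margX_moveMass]
  have hs := key s
  rw [hst, key t] at hs
  exact hne (Subtype.ext (add_left_cancel hs).symm)
end

section
/- Let X and Y be nonempty finite types, P : X × Y → ℝ a joint distribution, and Δ : X × Y × Y → ℝ a distortion function. Suppose P is non-deterministic, i.e., there exists x with P_X(x) > 0 such that P(·|x) is not a point mass, and suppose the kernel Q_P given by Q_P(x) = P(·|x) for P_X(x) > 0 (and defined arbitrarily, say uniform, elsewhere) minimizes the expected distortion 𝔇(·; P) over all kernels. Then the minimizer is non-unique: there exists a kernel Q' with 𝔇(Q'; P) = 𝔇(Q_P; P) = min over all kernels of 𝔇(·; P), and Σ_x P_X(x) · TV(Q'(x), Q_P(x)) > 0. -/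
open Finset

variable {X Y : Type*} [Fintype X] [Fintype Y]

/-- The cost of outputting `z` on input `x`, weighted by the joint distribution `P`. -/
def outputCost (Δ : X → Y → Y → ℝ) (P : X × Y → ℝ) (x : X) (z : Y) : ℝ :=
  ∑ y : Y, P (x, y) * Δ x y z

/-- The expected distortion is linear in the kernel. -/
theorem expDist_eq_sum_outputCost (Δ : X → Y → Y → ℝ) (Q : X → Y → ℝ) (P : X × Y → ℝ) :
    expDist Δ Q P = ∑ x : X, ∑ y' : Y, Q x y' * outputCost Δ P x y' := by
  unfold expDist outputCost
  refine sum_congr rfl fun x _ => ?_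
  simp only [mul_sum]
  rw [sum_comm]
  exact sum_congr rfl fun _ _ => sum_congr rfl fun _ _ => by ring

theorem isPMF_ite_eq {Z : Type*} [Fintype Z] [DecidableEq Z] (z₀ : Z) :
    IsPMF fun z => if z = z₀ then (1 : ℝ) else 0 :=
  ⟨fun z => by dsimp only; split_ifs <;> norm_num, by simp⟩

/-- The average of a function under a pmf is at least any lower bound of the function. -/
theorem IsPMF.le_sum_mul {Z : Type*} [Fintype Z] {q c : Z → ℝ} {m : ℝ} (hq : IsPMF q)
    (hm : ∀ z, m ≤ c z) : m ≤ ∑ z, q z * c z :=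
  calc m = ∑ z, q z * m := by rw [← sum_mul, hq.2, one_mul]
    _ ≤ ∑ z, q z * c z := sum_le_sum fun z _ => mul_le_mul_of_nonneg_left (hm z) (hq.1 z)

/-- A deterministic kernel choosing a cheapest output for every input is a minimizer. -/
theorem minimizesExpDist_of_forall_outputCost_le [DecidableEq Y] {Δ : X → Y → Y → ℝ}
    {P : X × Y → ℝ} {f : X → Y} (hf : ∀ x y, outputCost Δ P x (f x) ≤ outputCost Δ P x y) :
    MinimizesExpDist Δ (fun x y => if y = f x then 1 else 0) P := by
  refine ⟨fun x => isPMF_ite_eq (f x), fun Q hQ => ?_⟩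
  simp only [expDist_eq_sum_outputCost]
  exact sum_le_sum fun x _ => by simpa using (hQ x).le_sum_mul (hf x)

theorem TVdist_nonneg {Z : Type*} [Fintype Z] (p q : Z → ℝ) : 0 ≤ TVdist p q := by
  unfold TVdist
  positivity

theorem TVdist_pos {Z : Type*} [Fintype Z] {p q : Z → ℝ} (h : p ≠ q) : 0 < TVdist p q := by
  obtain ⟨z, hz⟩ := Function.ne_iff.mp h
  have : 0 < ∑ z, |p z - q z| :=
    sum_pos' (fun _ _ => abs_nonneg _) ⟨z, mem_univ z, abs_pos.mpr (sub_ne_zero.mpr hz)⟩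
  unfold TVdist
  positivity

/-- Lemma B.3: if `P` is non-deterministic and the kernel `Q_P` given by the
true conditionals `P(·|x)` (at positive-probability inputs; arbitrary, e.g.
uniform, elsewhere) minimizes the expected distortion, then the minimizer is
non-unique: there is another minimizing kernel `Q'` at strictly positive
average total-variation distance from `Q_P`. -/
theorem minimizer_nonunique [DecidableEq Y] [Nonempty X] [Nonempty Y]
    (P : X × Y → ℝ) (hP : IsJointDist P) (Δ : X → Y → Y → ℝ)
    (hnondet : ∃ x, 0 < margX P x ∧ ¬ IsPointMass (condY P x))
    (QP : X → Y → ℝ) (hQPker : IsKernel QP)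
    (hQPcond : ∀ x, 0 < margX P x → QP x = condY P x)
    (hQPmin : MinimizesExpDist Δ QP P) :
    ∃ Q' : X → Y → ℝ, MinimizesExpDist Δ Q' P ∧
      expDist Δ Q' P = expDist Δ QP P ∧
      0 < ∑ x : X, margX P x * TVdist (Q' x) (QP x) := by
  choose f hf using fun x => Finite.exists_min (outputCost Δ P x)
  have hmin := minimizesExpDist_of_forall_outputCost_le hf
  refine ⟨_, hmin, le_antisymm (hmin.2 QP hQPker) (hQPmin.2 _ hmin.1), ?_⟩
  obtain ⟨x, hx, hne⟩ := hnondet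
  refine sum_pos' (fun x _ => mul_nonneg (sum_nonneg fun y _ => hP.1 (x, y)) (TVdist_nonneg _ _))
    ⟨x, mem_univ x, mul_pos hx (TVdist_pos fun h => hne ⟨f x, fun y => ?_⟩)⟩
  rw [← hQPcond x hx, ← h]
end

section
/- Let γ denote the standard Gaussian measure on ℝ (mean 0, variance 1), Φ its cumulative distribution function, and let a, b, m₁, m₂ be real numbers. Set h = m₁/√(1 + a²), k = m₂/√(1 + b²), and ρ = (a·b)/(√(1 + a²)·√(1 + b²)) (note |ρ| < 1). Then ∫_ℝ Φ(a·x + m₁)·Φ(b·x + m₂) dγ(x) = (γ ⊗ γ){ (u, v) ∈ ℝ × ℝ : u ≤ h ∧ ρ·u + √(1 − ρ²)·v ≤ k }, i.e., it equals the standard bivariate normal probability BN(h, k | ρ) that a pair of standard Gaussian variables with correlation ρ lies in the quadrant (−∞, h] × (−∞, k]. -/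
open MeasureTheory ProbabilityTheory

/-- The standard normal CDF `Φ(t) = γ((−∞, t])`. -/
noncomputable def stdNormalCDF (t : ℝ) : ℝ := ((gaussianReal 0 1) (Set.Iic t)).toReal

/-- The characteristic function of the standard Gaussian measure, on the dual of `ℝ`. -/
lemma charFunDual_gaussianReal_zero_one (L : StrongDual ℝ ℝ) :
    charFunDual (gaussianReal 0 1) L = Complex.exp (((-(L 1) ^ 2 / 2 : ℝ)) : ℂ) := by
  have hL : (L : ℝ → ℝ) = fun x => L 1 * x := by
    ext x
    simpa [mul_comm] using L.map_smul x 1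
  rw [charFunDual_eq_charFun_map_one, hL, gaussianReal_map_const_mul, charFun_gaussianReal]
  congr 1
  simp
  ring

/-- Two standard Gaussian variables of the form `(y - a * x) / √(1 + a ^ 2)` and
`(z - b * x) / √(1 + b ^ 2)` have the same joint law as `(u, ρ * u + √(1 - ρ ^ 2) * v)`. -/
lemma map_prod_gaussianReal_eq (a b ρ : ℝ)
    (hρ : ρ = a * b / (Real.sqrt (1 + a ^ 2) * Real.sqrt (1 + b ^ 2))) :
    ((gaussianReal 0 1).prod ((gaussianReal 0 1).prod (gaussianReal 0 1))).map
        (fun p : ℝ × ℝ × ℝ => ((p.2.1 - a * p.1) / Real.sqrt (1 + a ^ 2),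
          (p.2.2 - b * p.1) / Real.sqrt (1 + b ^ 2))) =
      ((gaussianReal 0 1).prod (gaussianReal 0 1)).map
        (fun p : ℝ × ℝ => (p.1, ρ * p.1 + Real.sqrt (1 - ρ ^ 2) * p.2)) := by
  have hs : 0 < Real.sqrt (1 + a ^ 2) := by positivity
  have ht : 0 < Real.sqrt (1 + b ^ 2) := by positivity
  have hs2 : Real.sqrt (1 + a ^ 2) ^ 2 = 1 + a ^ 2 := Real.sq_sqrt (by positivity)
  have ht2 : Real.sqrt (1 + b ^ 2) ^ 2 = 1 + b ^ 2 := Real.sq_sqrt (by positivity)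
  have hρ1 : 0 ≤ 1 - ρ ^ 2 := by
    rw [hρ, div_pow, mul_pow, mul_pow, hs2, ht2, sub_nonneg, div_le_one (by positivity)]
    nlinarith [sq_nonneg a, sq_nonneg b]
  have hr2 : Real.sqrt (1 - ρ ^ 2) ^ 2 = 1 - ρ ^ 2 := Real.sq_sqrt hρ1
  set s := Real.sqrt (1 + a ^ 2)
  set t := Real.sqrt (1 + b ^ 2)
  set r := Real.sqrt (1 - ρ ^ 2)
  have hi : s⁻¹ ^ 2 * (1 + a ^ 2) = 1 := by rw [← hs2]; field_simp
  have hj : t⁻¹ ^ 2 * (1 + b ^ 2) = 1 := by rw [← ht2]; field_simp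
  have hρij : ρ = a * b * s⁻¹ * t⁻¹ := by rw [hρ]; field_simp
  let x : ℝ × ℝ × ℝ →L[ℝ] ℝ := .fst ℝ ℝ (ℝ × ℝ)
  let y : ℝ × ℝ × ℝ →L[ℝ] ℝ := (ContinuousLinearMap.fst ℝ ℝ ℝ).comp (.snd ℝ ℝ (ℝ × ℝ))
  let z : ℝ × ℝ × ℝ →L[ℝ] ℝ := (ContinuousLinearMap.snd ℝ ℝ ℝ).comp (.snd ℝ ℝ (ℝ × ℝ))
  let A : ℝ × ℝ × ℝ →L[ℝ] ℝ × ℝ := (s⁻¹ • (y - a • x)).prod (t⁻¹ • (z - b • x))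
  let B : ℝ × ℝ →L[ℝ] ℝ × ℝ := (ContinuousLinearMap.fst ℝ ℝ ℝ).prod
    (ρ • ContinuousLinearMap.fst ℝ ℝ ℝ + r • ContinuousLinearMap.snd ℝ ℝ ℝ)
  have hA : (fun p : ℝ × ℝ × ℝ => ((p.2.1 - a * p.1) / s, (p.2.2 - b * p.1) / t)) = A := by
    ext p <;> simp [A, x, y, z, div_eq_inv_mul]
  have hB : (fun p : ℝ × ℝ => (p.1, ρ * p.1 + r * p.2)) = B := by
    ext p <;> simp [B]
  rw [hA, hB]
  have := Measure.isProbabilityMeasure_map (μ := (gaussianReal 0 1).prod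
    ((gaussianReal 0 1).prod (gaussianReal 0 1))) A.continuous.aemeasurable
  have := Measure.isProbabilityMeasure_map (μ := (gaussianReal 0 1).prod
    (gaussianReal 0 1)) B.continuous.aemeasurable
  refine Measure.ext_of_charFunDual ?_
  ext L
  obtain ⟨P, Q, hL⟩ : ∃ P Q : ℝ, ∀ c d : ℝ, L (c, d) = c * P + d * Q := by
    refine ⟨L (1, 0), L (0, 1), fun c d => ?_⟩
    have h : (c, d) = c • ((1, 0) : ℝ × ℝ) + d • ((0, 1) : ℝ × ℝ) := by simp
    rw [h, map_add, map_smul, map_smul, smul_eq_mul, smul_eq_mul]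
  simp only [charFunDual_map, charFunDual_prod, charFunDual_gaussianReal_zero_one,
    ← Complex.exp_add, ← Complex.ofReal_add]
  congr 2
  simp only [A, B, x, y, z, ContinuousLinearMap.comp_apply, ContinuousLinearMap.prod_apply,
    ContinuousLinearMap.inl_apply, ContinuousLinearMap.inr_apply, smul_apply,
    sub_apply, add_apply, ContinuousLinearMap.coe_fst',
    ContinuousLinearMap.coe_snd', smul_eq_mul]
  simp only [hL, Prod.fst_zero, Prod.snd_zero]
  linear_combination (-1 / 2) * (P ^ 2 * hi + Q ^ 2 * hj - 2 * P * Q * hρij - Q ^ 2 * hr2)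

/-- The integral of a product of two Gaussian CDFs as a probability for three independent
standard Gaussian variables. -/
lemma integral_stdNormalCDF_mul_eq_prod {f g : ℝ → ℝ} (hf : Measurable f) (hg : Measurable g) :
    ∫ x, stdNormalCDF (f x) * stdNormalCDF (g x) ∂(gaussianReal 0 1) =
      (((gaussianReal 0 1).prod ((gaussianReal 0 1).prod (gaussianReal 0 1)))
        {p : ℝ × ℝ × ℝ | p.2.1 ≤ f p.1 ∧ p.2.2 ≤ g p.1}).toReal := by
  have hS : MeasurableSet {p : ℝ × ℝ × ℝ | p.2.1 ≤ f p.1 ∧ p.2.2 ≤ g p.1} :=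
    (measurableSet_le measurable_snd.fst (hf.comp measurable_fst)).inter
      (measurableSet_le measurable_snd.snd (hg.comp measurable_fst))
  rw [Measure.prod_apply hS, ← integral_toReal (measurable_measure_prodMk_left hS).aemeasurable
    (.of_forall fun _ => measure_lt_top _ _)]
  refine integral_congr_ae (.of_forall fun x => ?_)
  have h : Prod.mk x ⁻¹' {p : ℝ × ℝ × ℝ | p.2.1 ≤ f p.1 ∧ p.2.2 ≤ g p.1} =
      Set.Iic (f x) ×ˢ Set.Iic (g x) := rfl
  simp only [h, Measure.prod_prod, ENNReal.toReal_mul, stdNormalCDF]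

/-- Theorem E.4 (Probit critic processes), via Owen's identities 10,010.8 and
20,010.3: `∫ Φ(a·x+m₁)·Φ(b·x+m₂) dγ(x) = BN(h, k | ρ)`, the standard bivariate
normal probability with correlation `ρ` of the quadrant `(−∞,h] × (−∞,k]`,
where `h = m₁/√(1+a²)`, `k = m₂/√(1+b²)`,
`ρ = a·b/(√(1+a²)·√(1+b²))`; the pair `(u, ρ·u + √(1−ρ²)·v)` for independent
standard Gaussians `(u, v)` is standard bivariate normal with correlation `ρ`. -/
theorem integral_stdNormalCDF_mul (a b m₁ m₂ h k ρ : ℝ)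
    (hh : h = m₁ / Real.sqrt (1 + a ^ 2))
    (hk : k = m₂ / Real.sqrt (1 + b ^ 2))
    (hρ : ρ = a * b / (Real.sqrt (1 + a ^ 2) * Real.sqrt (1 + b ^ 2))) :
    ∫ x, stdNormalCDF (a * x + m₁) * stdNormalCDF (b * x + m₂) ∂(gaussianReal 0 1) =
      (((gaussianReal 0 1).prod (gaussianReal 0 1))
        {p : ℝ × ℝ | p.1 ≤ h ∧ ρ * p.1 + Real.sqrt (1 - ρ ^ 2) * p.2 ≤ k}).toReal := by
  have hs : 0 < Real.sqrt (1 + a ^ 2) := by positivity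
  have ht : 0 < Real.sqrt (1 + b ^ 2) := by positivity
  have hmap := congrArg (fun μ => μ (Set.Iic h ×ˢ Set.Iic k)) (map_prod_gaussianReal_eq a b ρ hρ)
  have hQ : MeasurableSet (Set.Iic h ×ˢ Set.Iic k) := measurableSet_Iic.prod measurableSet_Iic
  rw [Measure.map_apply (by fun_prop) hQ, Measure.map_apply (by fun_prop) hQ] at hmap
  rw [integral_stdNormalCDF_mul_eq_prod (by fun_prop) (by fun_prop)]
  refine congrArg ENNReal.toReal (Eq.trans (congrArg _ ?_) hmap)
  ext p
  simp only [Set.mem_ofPred_eq, Set.mem_preimage, Set.mem_prod, Set.mem_Iic, hh, hk,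
    div_le_div_iff_of_pos_right hs, div_le_div_iff_of_pos_right ht, sub_le_iff_le_add']
end
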